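/- For every integer α with 4 ≤ α ≤ 6 and every nonnegative integer N, the equation αx² + (3y² − 2y) + (3z² − 2z) + 3(3t² − 2t) = N has an integer solution in ℤ⁴. That is, the quaternary mixed sums αx²+P₈(y)+P₈(z)+3P₈(t) for 4 ≤ α ≤ 6 are universal. -/

import Mathlib

/-!
Completing squares, `αx² + P₈(y) + P₈(z) + 3P₈(t) = N` becomes
`3N + 5 = 3αx² + Y² + Z² + 3T²` with none of `Y`, `Z`, `T` divisible by `3`; for `Y` and `Z` this is
automatic once `3 ∤ T`.

Every positive `n` prime to `3` has the form `Y² + Z² + 3T²`. Dirichlet's theorem and quadratic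
reciprocity give a positive ternary lattice of determinant `3` which represents `n` and whose
`2 × 2` Gram determinants are never `2` modulo `3`. Hermite reduction leaves only `⟨1, 1, 3⟩` and
`⟨1⟩ ⊥ A₂`; the latter is excluded by the Gram determinant `1 · 2` of a generator of `⟨1⟩` and a
root of `A₂`.

It remains to arrange `3 ∤ T` when `n ≡ 2 (mod 3)`. For `α = 6`, the automorphs of `Y² + 3T²` do so
if `n ≡ 0, 1 (mod 4)`, and `n = 3N + 5` or `n = 3N + 5 - 18` has this property. For `α = 4` they
turn `Y² + Z² + 3T²` into `Y² + Z² + 12x²` when `n` is even, so `T ∈ {1, 2}` can be fixed in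
advance. For `α = 5` put `x = 3`: since `9 = 2² + 5 · 1²`, the form `T² + 5x²` has an automorph with
denominator `3`, which moves `(T, 3)` with `3 ∣ T` to a pair whose first entry is prime to `3`; this
needs `N ≥ 44`.
-/

section SquaresModuloThreeAndFour

theorem sq_emod_three (x : ℤ) : x ^ 2 % 3 = if 3 ∣ x then 0 else 1 := by
  have hmod : x % 3 = 0 ∨ x % 3 = 1 ∨ x % 3 = 2 := by lia
  rcases hmod with h | h | h <;> simp [sq, Int.mul_emod, Int.dvd_iff_emod_eq_zero, h]

theorem sq_emod_four (x : ℤ) : x ^ 2 % 4 = x % 2 := by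
  have hmod : x % 4 = 0 ∨ x % 4 = 1 ∨ x % 4 = 2 ∨ x % 4 = 3 := by lia
  rcases hmod with h | h | h | h <;> simp [sq, Int.mul_emod, h] <;> lia

end SquaresModuloThreeAndFour

section GramDeterminants

variable {R M : Type*} [CommRing R] [AddCommGroup M] [Module R M]

/-- `B u u` times the value of `B` at the projections of `v` and `w` along `u`, that is, the minor
of the Gram matrix of `u, v, w` with rows `u, v` and columns `u, w`. -/
def gramMinor (B : LinearMap.BilinForm R M) (u v w : M) : R :=
  B u u * B v w - B u v * B u w

/-- The Gram determinant of two vectors for a symmetric bilinear form. -/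
def gramDet₂ (B : LinearMap.BilinForm R M) (u v : M) : R :=
  B u u * B v v - B u v ^ 2

/-- The Gram determinant of three vectors for a symmetric bilinear form, expanded so that only
the entries on and above the diagonal occur. -/
def gramDet₃ (B : LinearMap.BilinForm R M) (u v w : M) : R :=
  B u u * B v v * B w w + 2 * B v w * B u w * B u v
    - B u u * B v w ^ 2 - B v v * B u w ^ 2 - B w w * B u v ^ 2

variable {B : LinearMap.BilinForm R M}

theorem gramDet₂_mul_gramDet₂ (u v w : M) :
    gramDet₂ B u v * gramDet₂ B u w = B u u * gramDet₃ B u v w + gramMinor B u v w ^ 2 := by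
  unfold gramDet₂ gramDet₃ gramMinor
  ring

theorem gramDet₂_comm (hB : B.IsSymm) (u v : M) : gramDet₂ B u v = gramDet₂ B v u := by
  unfold gramDet₂
  rw [hB.eq v u]
  ring

theorem gramDet₃_swap_left (hB : B.IsSymm) (u v w : M) :
    gramDet₃ B v u w = gramDet₃ B u v w := by
  unfold gramDet₃
  rw [hB.eq v u]
  ring

theorem gramDet₃_swap_right (hB : B.IsSymm) (u v w : M) :
    gramDet₃ B u w v = gramDet₃ B u v w := by
  unfold gramDet₃
  rw [hB.eq w v]
  ring

theorem gramDet₂_add_smul (hB : B.IsSymm) (u v : M) (i : R) :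
    gramDet₂ B u (v + i • u) = gramDet₂ B u v := by
  simp only [gramDet₂, map_add, map_smul, LinearMap.add_apply, LinearMap.smul_apply, smul_eq_mul,
    hB.eq v u]
  ring

theorem gramDet₃_add_smul_middle (hB : B.IsSymm) (u v w : M) (i : R) :
    gramDet₃ B u (v + i • u) w = gramDet₃ B u v w := by
  simp only [gramDet₃, map_add, map_smul, LinearMap.add_apply, LinearMap.smul_apply, smul_eq_mul,
    hB.eq v u]
  ring

theorem gramDet₃_add_smul_right (hB : B.IsSymm) (u v w : M) (j k : R) :
    gramDet₃ B u v (w + j • u + k • v) = gramDet₃ B u v w := by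
  simp only [gramDet₃, map_add, map_smul, LinearMap.add_apply, LinearMap.smul_apply, smul_eq_mul,
    hB.eq v u, hB.eq w u, hB.eq w v]
  ring

theorem gramMinor_add_smul_right (hB : B.IsSymm) (u v w : M) (j k : R) :
    gramMinor B u v (w + j • u + k • v) = gramMinor B u v w + k * gramDet₂ B u v := by
  simp only [gramMinor, gramDet₂, map_add, map_smul, smul_eq_mul, hB.eq v u]
  ring

-- Modulo its determinant the Gram matrix of `u, v, w` has rank at most two, so the form induced on
-- the second exterior power has rank at most one.
theorem gramDet₃_dvd_gramDet₂_mul_gramDet₂_sub_sq (hB : B.IsSymm) {u v w x y : M}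
    (hx : x ∈ Submodule.span R {u, v, w}) (hy : y ∈ Submodule.span R {u, v, w}) :
    gramDet₃ B u v w ∣
      gramDet₂ B u v * gramDet₂ B x y - (B u x * B v y - B u y * B v x) ^ 2 := by
  obtain ⟨x₁, x₂, x₃, rfl⟩ := Submodule.mem_span_triple.mp hx
  obtain ⟨y₁, y₂, y₃, rfl⟩ := Submodule.mem_span_triple.mp hy
  let z := (x₂ * y₃ - x₃ * y₂) • v - (x₃ * y₁ - x₁ * y₃) • u
  refine ⟨B z z, ?_⟩
  simp only [z, gramDet₂, gramDet₃, map_add, map_sub, map_smul, LinearMap.add_apply,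
    LinearMap.sub_apply, LinearMap.smul_apply, smul_eq_mul, hB.eq v u, hB.eq w u, hB.eq w v]
  ring

end GramDeterminants

section HermiteReduction

variable {L : Type*} [AddCommGroup L]

/-- The vectors `u, v, w` generate `L`, have Gram determinant `d`, and the two smaller leading
principal minors of their Gram matrix are positive; for `0 < d` and symmetric `B` they thus form a
basis of a positive definite lattice. -/
structure IsPosGenerating (B : LinearMap.BilinForm ℤ L) (d : ℤ) (u v w : L) : Prop where
  mem_span (x : L) : x ∈ Submodule.span ℤ {u, v, w}
  apply_self_pos : 0 < B u u
  gramDet₂_pos : 0 < gramDet₂ B u v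
  gramDet₃_eq : gramDet₃ B u v w = d

/-- `v` and `w` are reduced relative to the vectors preceding them: all Gram–Schmidt coefficients
are at most `1 / 2` in absolute value. -/
structure IsSizeReduced (B : LinearMap.BilinForm ℤ L) (u v w : L) : Prop where
  two_mul_abs_apply_middle_le : 2 * |B u v| ≤ B u u
  two_mul_abs_apply_right_le : 2 * |B u w| ≤ B u u
  two_mul_abs_gramMinor_le : 2 * |gramMinor B u v w| ≤ gramDet₂ B u v

/-- Hermite reduction: besides being size-reduced, no exchange of neighbouring vectors shortens
a Gram–Schmidt vector. -/
structure IsHermiteReduced (B : LinearMap.BilinForm ℤ L) (u v w : L) : Prop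
    extends IsSizeReduced B u v w where
  apply_self_le : B u u ≤ B v v
  gramDet₂_le : gramDet₂ B u v ≤ gramDet₂ B u w

variable {B : LinearMap.BilinForm ℤ L} {d : ℤ} {u v w : L}

namespace IsPosGenerating

theorem swap_left (hB : B.IsSymm) (h : IsPosGenerating B d u v w) :
    IsPosGenerating B d v u w where
  mem_span x := by
    rw [Set.insert_comm]
    exact h.mem_span x
  apply_self_pos := by
    have hdet := h.gramDet₂_pos
    unfold gramDet₂ at hdet
    have hmul : 0 < B u u * B v v := by linarith [sq_nonneg (B u v)]
    exact pos_of_mul_pos_right hmul h.apply_self_pos.le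
  gramDet₂_pos := gramDet₂_comm hB u v ▸ h.gramDet₂_pos
  gramDet₃_eq := (gramDet₃_swap_left hB u v w).trans h.gramDet₃_eq

theorem swap_right (hB : B.IsSymm) (hd : 0 < d) (h : IsPosGenerating B d u v w) :
    IsPosGenerating B d u w v where
  mem_span x := by
    rw [Set.pair_comm]
    exact h.mem_span x
  apply_self_pos := h.apply_self_pos
  gramDet₂_pos := by
    have hmul : 0 < gramDet₂ B u v * gramDet₂ B u w := by
      rw [gramDet₂_mul_gramDet₂, h.gramDet₃_eq]
      have := h.apply_self_pos
      positivity
    exact pos_of_mul_pos_right hmul h.gramDet₂_pos.le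
  gramDet₃_eq := (gramDet₃_swap_right hB u v w).trans h.gramDet₃_eq

theorem add_smul_middle (hB : B.IsSymm) (h : IsPosGenerating B d u v w) (i : ℤ) :
    IsPosGenerating B d u (v + i • u) w where
  mem_span x := by
    obtain ⟨a, b, c, rfl⟩ := Submodule.mem_span_triple.mp (h.mem_span x)
    exact Submodule.mem_span_triple.mpr ⟨a - b * i, b, c, by module⟩
  apply_self_pos := h.apply_self_pos
  gramDet₂_pos := (gramDet₂_add_smul hB u v i).symm ▸ h.gramDet₂_pos
  gramDet₃_eq := (gramDet₃_add_smul_middle hB u v w i).trans h.gramDet₃_eq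

theorem add_smul_right (hB : B.IsSymm) (h : IsPosGenerating B d u v w) (j k : ℤ) :
    IsPosGenerating B d u v (w + j • u + k • v) where
  mem_span x := by
    obtain ⟨a, b, c, rfl⟩ := Submodule.mem_span_triple.mp (h.mem_span x)
    exact Submodule.mem_span_triple.mpr ⟨a - c * j, b - c * k, c, by module⟩
  apply_self_pos := h.apply_self_pos
  gramDet₂_pos := h.gramDet₂_pos
  gramDet₃_eq := (gramDet₃_add_smul_right hB u v w j k).trans h.gramDet₃_eq

end IsPosGenerating

theorem exists_two_mul_abs_add_mul_le {a : ℤ} (ha : 0 < a) (b : ℤ) :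
    ∃ k : ℤ, 2 * |b + k * a| ≤ a := by
  refine ⟨-((2 * b + a) / (2 * a)), ?_⟩
  have hdiv := Int.emod_add_mul_ediv (2 * b + a) (2 * a)
  have hlt := Int.emod_lt_of_pos (2 * b + a) (show 0 < 2 * a by lia)
  have hnonneg := Int.emod_nonneg (2 * b + a) (show 2 * a ≠ 0 by lia)
  rw [← abs_two (α := ℤ), ← abs_mul, abs_le, abs_two]
  constructor <;> linarith

theorem IsPosGenerating.exists_isSizeReduced (hB : B.IsSymm) (h : IsPosGenerating B d u v w) :
    ∃ v' w', IsPosGenerating B d u v' w' ∧ IsSizeReduced B u v' w' ∧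
      gramDet₂ B u v' = gramDet₂ B u v := by
  obtain ⟨i, hi⟩ := exists_two_mul_abs_add_mul_le h.apply_self_pos (B u v)
  have h' := h.add_smul_middle hB i
  set v' := v + i • u with hv'
  obtain ⟨k, hk⟩ := exists_two_mul_abs_add_mul_le h'.gramDet₂_pos (gramMinor B u v' w)
  obtain ⟨j, hj⟩ := exists_two_mul_abs_add_mul_le h.apply_self_pos (B u w + k * B u v')
  refine ⟨v', w + j • u + k • v', h'.add_smul_right hB j k, ⟨?_, ?_, ?_⟩,
    gramDet₂_add_smul hB u v i⟩
  · simpa [hv'] using hi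
  · rw [map_add, map_add, map_smul, map_smul, smul_eq_mul, smul_eq_mul, add_right_comm]
    exact hj
  · rwa [gramMinor_add_smul_right hB]

theorem IsPosGenerating.exists_isHermiteReduced (hB : B.IsSymm) (hd : 0 < d)
    (h : IsPosGenerating B d u v w) :
    ∃ u' v' w', IsPosGenerating B d u' v' w' ∧ IsHermiteReduced B u' v' w' := by
  induction hm : (B u u + gramDet₂ B u v).toNat using Nat.strong_induction_on
    generalizing u v w with
  | _ m ih =>
    obtain ⟨v', w', h', hred, hdet⟩ := h.exists_isSizeReduced hB
    have hu := h'.apply_self_pos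
    have huv := h'.gramDet₂_pos
    by_cases hswap_left : B v' v' < B u u
    · refine ih _ ?_ (h'.swap_left hB) rfl
      rw [gramDet₂_comm hB v' u]
      lia
    by_cases hswap_right : gramDet₂ B u w' < gramDet₂ B u v'
    · exact ih _ (by lia) (h'.swap_right hB hd) rfl
    · exact ⟨u, v', w', h', hred, not_lt.mp hswap_left, not_lt.mp hswap_right⟩

namespace IsHermiteReduced

theorem three_mul_sq_apply_self_le (h : IsHermiteReduced B u v w) :
    3 * B u u ^ 2 ≤ 4 * gramDet₂ B u v := by
  have hsq : (2 * |B u v|) ^ 2 ≤ B u u ^ 2 :=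
    pow_le_pow_left₀ (by positivity) h.two_mul_abs_apply_middle_le 2
  have hnonneg : 0 ≤ B u u := (by positivity : 0 ≤ 2 * |B u v|).trans h.two_mul_abs_apply_middle_le
  have hmul : B u u * B u u ≤ B u u * B v v := mul_le_mul_of_nonneg_left h.apply_self_le hnonneg
  rw [mul_pow, sq_abs] at hsq
  unfold gramDet₂
  linarith

theorem three_mul_sq_gramDet₂_le (h : IsHermiteReduced B u v w) :
    3 * gramDet₂ B u v ^ 2 ≤ 4 * (B u u * gramDet₃ B u v w) := by
  have hsq : (2 * |gramMinor B u v w|) ^ 2 ≤ gramDet₂ B u v ^ 2 :=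
    pow_le_pow_left₀ (by positivity) h.two_mul_abs_gramMinor_le 2
  have hnonneg : 0 ≤ gramDet₂ B u v :=
    (by positivity : 0 ≤ 2 * |gramMinor B u v w|).trans h.two_mul_abs_gramMinor_le
  have hmul := mul_le_mul_of_nonneg_left h.gramDet₂_le hnonneg
  rw [mul_pow, sq_abs] at hsq
  linarith [gramDet₂_mul_gramDet₂ (B := B) u v w]

theorem apply_self_pow_three_le (h : IsHermiteReduced B u v w) (hpos : 0 < B u u) :
    27 * B u u ^ 3 ≤ 64 * gramDet₃ B u v w := by
  have hsq : (3 * B u u ^ 2) ^ 2 ≤ (4 * gramDet₂ B u v) ^ 2 :=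
    pow_le_pow_left₀ (by positivity) h.three_mul_sq_apply_self_le 2
  refine le_of_mul_le_mul_left ?_ hpos
  linarith [h.three_mul_sq_gramDet₂_le]

end IsHermiteReduced

end HermiteReduction

section DeterminantThree

variable {L : Type*} [AddCommGroup L] {B : LinearMap.BilinForm ℤ L} {u v w : L}

theorem IsPosGenerating.gramDet₂_emod_three_ne_two (hB : B.IsSymm)
    (h : IsPosGenerating B 3 u v w) (huv : gramDet₂ B u v % 3 = 1) (x y : L) :
    gramDet₂ B x y % 3 ≠ 2 := by
  intro hxy
  have hdvd := gramDet₃_dvd_gramDet₂_mul_gramDet₂_sub_sq hB (h.mem_span x) (h.mem_span y)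
  have hprod : gramDet₂ B u v * gramDet₂ B x y % 3 = 2 := by rw [Int.mul_emod, huv, hxy]; rfl
  have hsq := sq_emod_three (B u x * B v y - B u y * B v x)
  rw [h.gramDet₃_eq] at hdvd
  split_ifs at hsq <;> lia

theorem IsHermiteReduced.gram_eq (hpos : IsPosGenerating B 3 u v w)
    (hred : IsHermiteReduced B u v w) (hne : gramDet₂ B u v % 3 ≠ 2) :
    B u u = 1 ∧ B v v = 1 ∧ B w w = 3 ∧ B u v = 0 ∧ B u w = 0 ∧ B v w = 0 := by
  have huu : B u u = 1 := by
    have hcube := hred.apply_self_pow_three_le hpos.apply_self_pos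
    rw [hpos.gramDet₃_eq] at hcube
    have hlt : B u u < 2 := lt_of_pow_lt_pow_left₀ 3 (by norm_num) (by lia)
    linarith [hpos.apply_self_pos]
  have huv : B u v = 0 :=
    Int.abs_lt_one_iff.mp (by linarith [hred.two_mul_abs_apply_middle_le])
  have huw : B u w = 0 :=
    Int.abs_lt_one_iff.mp (by linarith [hred.two_mul_abs_apply_right_le])
  have hdet₂ : gramDet₂ B u v = 1 := by
    have hsq := hred.three_mul_sq_gramDet₂_le
    rw [hpos.gramDet₃_eq, huu] at hsq
    have hlt : gramDet₂ B u v < 3 := lt_of_pow_lt_pow_left₀ 2 (by norm_num) (by lia)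
    have := hpos.gramDet₂_pos
    lia
  have hvw : B v w = 0 := by
    have hminor := hred.two_mul_abs_gramMinor_le
    rw [gramMinor, hdet₂, huu, huv, one_mul, zero_mul, sub_zero] at hminor
    exact Int.abs_lt_one_iff.mp (by lia)
  have hvv : B v v = 1 := by simpa [gramDet₂, huu, huv] using hdet₂
  have hww : B w w = 3 := by
    simpa [gramDet₃, huu, huv, huw, hvw, hvv] using hpos.gramDet₃_eq
  exact ⟨huu, hvv, hww, huv, huw, hvw⟩

theorem IsPosGenerating.exists_apply_self_eq (hB : B.IsSymm) (h : IsPosGenerating B 3 u v w)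
    (huv : gramDet₂ B u v % 3 = 1) (x : L) :
    ∃ i j k : ℤ, B x x = i ^ 2 + j ^ 2 + 3 * k ^ 2 := by
  obtain ⟨u', v', w', h', hred⟩ := h.exists_isHermiteReduced hB (by norm_num)
  obtain ⟨huu, hvv, hww, huv', huw, hvw⟩ :=
    hred.gram_eq h' (h.gramDet₂_emod_three_ne_two hB huv u' v')
  obtain ⟨i, j, k, rfl⟩ := Submodule.mem_span_triple.mp (h'.mem_span x)
  refine ⟨i, j, k, ?_⟩
  simp only [map_add, map_smul, LinearMap.add_apply, LinearMap.smul_apply, smul_eq_mul,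
    hB.eq v' u', hB.eq w' u', hB.eq w' v', huu, hvv, hww, huv', huw, hvw]
  ring

end DeterminantThree

section TernaryRepresentation

open scoped NumberTheorySymbols

theorem isCoprime_sub_mul_of_dvd_mul {R : Type*} [CommRing R] {a c q : R} (h : IsCoprime a c)
    (hq : q ∣ a * c) : IsCoprime (a - c) (a * q) := by
  have ha : IsCoprime (a - c) a := by
    simpa [neg_add_eq_sub] using h.symm.neg_left.add_mul_left_left 1
  have hc : IsCoprime (a - c) c := by
    simpa [sub_eq_add_neg] using h.add_mul_left_left (-1)
  exact ha.mul_right ((ha.mul_right hc).of_isCoprime_of_dvd_right hq)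

theorem exists_prime_add_eq_mul {a c q : ℕ} (ha : a ≠ 0) (hq : q ≠ 0) (hac : a.Coprime c)
    (hdvd : q ∣ a * c) :
    ∃ p m : ℕ, p.Prime ∧ m ≡ 1 [MOD q] ∧ p + c = a * m := by
  have hcop : IsCoprime ((a : ℤ) - c) ((a * q : ℕ) : ℤ) := by
    push_cast
    exact isCoprime_sub_mul_of_dvd_mul hac.isCoprime (mod_cast hdvd)
  obtain ⟨p, -, hp, hpmod⟩ := Nat.forall_exists_prime_gt_and_zmodEq 0 (mul_ne_zero ha hq) hcop
  have hmod : p + c ≡ a [MOD a * q] := by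
    rw [← Int.natCast_modEq_iff]
    push_cast
    simpa using hpmod.add_right (c : ℤ)
  obtain ⟨m, hm⟩ : a ∣ p + c := (hmod.dvd_iff (dvd_mul_right a q)).mpr dvd_rfl
  refine ⟨p, m, hp, ?_, hm⟩
  rw [hm] at hmod
  exact Nat.ModEq.mul_left_cancel' ha (by rwa [mul_one])

theorem jacobiSym_neg_four_mul_eq_one {n m p : ℕ} (hm : m ≡ 1 [MOD 12])
    (hpm : p + 3 = 4 * n * m) : J(-(4 * m) | p) = 1 := by
  have hm12 : m % 12 = 1 := hm
  have hp4 : p % 4 = 1 := by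
    rw [mul_assoc] at hpm
    lia
  have hp : Odd p := Nat.odd_iff.mpr (by lia)
  have hmodd : Odd m := Nat.odd_iff.mpr (by lia)
  have hp_mod : (p : ℤ) % m = -3 % m := by
    rw [← Int.ModEq, Int.modEq_comm, Int.modEq_iff_dvd]
    exact ⟨4 * n, by lia⟩
  calc J(-(4 * m) | p) = J(m | p) := by
        rw [jacobiSym.neg _ hp, ZMod.χ₄_nat_one_mod_four hp4, one_mul, jacobiSym.mul_left,
          jacobiSym.at_four hp, one_mul]
    _ = J(p | m) := jacobiSym.quadratic_reciprocity_one_mod_four (by lia) hp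
    _ = J(-3 | m) := jacobiSym.mod_left' hp_mod
    _ = J(-3 | m % 12) := jacobiSym.mod_right _ hmodd
    _ = 1 := by rw [hm12, jacobiSym.one_right]

theorem exists_add_sq_eq_mul_of_jacobiSym_neg_eq_one {p : ℕ} (hp : p.Prime) {b : ℤ}
    (hb : J(-b | p) = 1) : ∃ h k : ℤ, b + h ^ 2 = p * k := by
  have := Fact.mk hp
  obtain ⟨x, hx⟩ := ZMod.isSquare_of_jacobiSym_eq_one hb
  obtain ⟨h, rfl⟩ := ZMod.intCast_surjective x
  refine ⟨h, (ZMod.intCast_zmod_eq_zero_iff_dvd _ p).mp ?_⟩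
  push_cast at hx ⊢
  linear_combination -hx

theorem isPosGenerating_toBilin' {M : Matrix (Fin 3) (Fin 3) ℤ} (hM : M.IsSymm)
    (hM₁ : 0 < M 0 0) (hM₂ : 0 < M 0 0 * M 1 1 - M 0 1 ^ 2) :
    IsPosGenerating M.toBilin' M.det (Pi.single 0 1) (Pi.single 1 1) (Pi.single 2 1) where
  mem_span x := by
    refine Submodule.mem_span_triple.mpr ⟨x 0, x 1, x 2, ?_⟩
    ext i
    fin_cases i <;> simp
  apply_self_pos := by rwa [Matrix.toBilin'_single]
  gramDet₂_pos := by simpa only [gramDet₂, Matrix.toBilin'_single]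
  gramDet₃_eq := by
    simp only [gramDet₃, Matrix.toBilin'_single, Matrix.det_fin_three, hM.apply 0 1, hM.apply 0 2,
      hM.apply 1 2]
    ring

theorem exists_apply_two_two_eq_sq_add_sq_add_three_mul_sq {M : Matrix (Fin 3) (Fin 3) ℤ}
    (hM : M.IsSymm) (hM₁ : 0 < M 0 0) (hM₂ : 0 < M 0 0 * M 1 1 - M 0 1 ^ 2)
    (hmod : (M 0 0 * M 1 1 - M 0 1 ^ 2) % 3 = 1) (hdet : M.det = 3) :
    ∃ x y z : ℤ, M 2 2 = x ^ 2 + y ^ 2 + 3 * z ^ 2 := by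
  have hpos := isPosGenerating_toBilin' hM hM₁ hM₂
  rw [hdet] at hpos
  simpa only [Matrix.toBilin'_single] using
    hpos.exists_apply_self_eq (Matrix.isSymm_toBilin'_iff_isSymm.mpr hM)
      (by simpa only [gramDet₂, Matrix.toBilin'_single]) (Pi.single 2 1)

theorem exists_eq_sq_add_sq_add_three_mul_sq_of_add_sq_eq_mul {n p b h k : ℤ} (hp : 0 < p)
    (hb : 0 < b) (hb3 : b % 3 = 1) (hpb : p + 3 = b * n) (hk : b + h ^ 2 = p * k) :
    ∃ x y z : ℤ, n = x ^ 2 + y ^ 2 + 3 * z ^ 2 := by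
  let M : Matrix (Fin 3) (Fin 3) ℤ := !![k, h, 1; h, p, 0; 1, 0, n]
  have hM : M.IsSymm := Matrix.IsSymm.ext fun i j ↦ by fin_cases i <;> fin_cases j <;> rfl
  have hk_pos : 0 < k := pos_of_mul_pos_right (hk ▸ by positivity) hp.le
  have hminor : M 0 0 * M 1 1 - M 0 1 ^ 2 = b := by
    change k * p - h ^ 2 = b
    linarith
  have hdet : M.det = 3 := by
    simp only [M, Matrix.det_fin_three, Matrix.of_apply, Matrix.cons_val]
    linear_combination (-n) * hk - hpb
  exact exists_apply_two_two_eq_sq_add_sq_add_three_mul_sq hM hk_pos (hminor ▸ hb)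
    (hminor ▸ hb3) hdet

theorem exists_eq_sq_add_sq_add_three_mul_sq {n : ℤ} (hn : 0 ≤ n) (hn3 : ¬3 ∣ n) :
    ∃ x y z : ℤ, n = x ^ 2 + y ^ 2 + 3 * z ^ 2 := by
  lift n to ℕ using hn
  have hcop : (4 * n).Coprime 3 := by
    rw [Nat.coprime_comm, Nat.Prime.coprime_iff_not_dvd Nat.prime_three]
    lia
  obtain ⟨p, m, hp, hm, hpm⟩ :=
    exists_prime_add_eq_mul (q := 12) (by lia) (by norm_num) hcop ⟨n, by ring⟩
  obtain ⟨h, k, hk⟩ :=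
    exists_add_sq_eq_mul_of_jacobiSym_neg_eq_one hp (jacobiSym_neg_four_mul_eq_one hm hpm)
  have hm12 : m % 12 = 1 := hm
  refine exists_eq_sq_add_sq_add_three_mul_sq_of_add_sq_eq_mul (mod_cast hp.pos) (by lia)
    (by lia) ?_ hk
  rw [mul_right_comm]
  exact_mod_cast hpm

end TernaryRepresentation

section OctagonalSums

theorem add_two_mul_sq_add_three_mul_sq {R : Type*} [CommRing R] (T k : R) :
    (T + 2 * k) ^ 2 + 3 * T ^ 2 = (2 * T + k) ^ 2 + 3 * k ^ 2 := by
  ring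

theorem exists_sq_add_three_mul_sq_eq_not_dvd {Y T : ℤ} (hpar : Y % 2 = T % 2) (hY : ¬3 ∣ Y)
    (hT : 3 ∣ T) : ∃ Y' T' : ℤ, Y ^ 2 + 3 * T ^ 2 = Y' ^ 2 + 3 * T' ^ 2 ∧ ¬3 ∣ T' := by
  obtain ⟨k, rfl⟩ : ∃ k, Y = T + 2 * k := ⟨(Y - T) / 2, by lia⟩
  exact ⟨2 * T + k, k, add_two_mul_sq_add_three_mul_sq T k, by lia⟩

theorem exists_sq_add_three_mul_sq_eq_sq_add_twelve_mul_sq {Y T : ℤ} (hY : Y % 2 = 1)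
    (hT : T % 2 = 1) : ∃ Y' X : ℤ, Y ^ 2 + 3 * T ^ 2 = Y' ^ 2 + 12 * X ^ 2 := by
  obtain ⟨S, hS, k, rfl⟩ : ∃ S, S ^ 2 = T ^ 2 ∧ ∃ k, Y = S + 2 * (2 * k) := by
    by_cases h : 4 ∣ Y - T
    · exact ⟨T, rfl, (Y - T) / 4, by lia⟩
    · exact ⟨-T, neg_sq T, (Y + T) / 4, by lia⟩
  refine ⟨2 * S + 2 * k, k, ?_⟩
  rw [← hS, add_two_mul_sq_add_three_mul_sq]
  ring

theorem exists_eq_sq_add_sq_add_three_mul_sq_not_dvd {n : ℤ} (hn : 0 ≤ n) (hn3 : n % 3 = 2)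
    (hn4 : n % 4 = 0 ∨ n % 4 = 1) :
    ∃ Y Z T : ℤ, n = Y ^ 2 + Z ^ 2 + 3 * T ^ 2 ∧ ¬3 ∣ T := by
  obtain ⟨Y, Z, T, hYZT⟩ := exists_eq_sq_add_sq_add_three_mul_sq hn (by lia)
  by_cases hT : 3 ∣ T
  · have hYZ : ¬3 ∣ Y ∧ ¬3 ∣ Z := by grind [sq_emod_three Y, sq_emod_three Z]
    have hpar : Y % 2 = T % 2 ∨ Z % 2 = T % 2 := by
      grind [sq_emod_four Y, sq_emod_four Z, sq_emod_four T]
    rcases hpar with hpar | hpar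
    · obtain ⟨Y', T', hYT, hT'⟩ := exists_sq_add_three_mul_sq_eq_not_dvd hpar hYZ.1 hT
      exact ⟨Y', Z, T', by linarith, hT'⟩
    · obtain ⟨Z', T', hZT, hT'⟩ := exists_sq_add_three_mul_sq_eq_not_dvd hpar hYZ.2 hT
      exact ⟨Y, Z', T', by linarith, hT'⟩
  · exact ⟨Y, Z, T, hYZT, hT⟩

theorem exists_eq_sq_add_sq_add_twelve_mul_sq {n : ℤ} (hn : 0 ≤ n) (hn3 : ¬3 ∣ n)
    (hn2 : n % 2 = 0) : ∃ Y Z X : ℤ, n = Y ^ 2 + Z ^ 2 + 12 * X ^ 2 := by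
  obtain ⟨Y, Z, T, hYZT⟩ := exists_eq_sq_add_sq_add_three_mul_sq hn hn3
  rcases Int.emod_two_eq_zero_or_one T with hT | hT
  · obtain ⟨X, rfl⟩ : 2 ∣ T := Int.dvd_of_emod_eq_zero hT
    exact ⟨Y, Z, X, by linarith⟩
  have hodd : Y % 2 = 1 ∨ Z % 2 = 1 := by
    grind [sq_emod_four Y, sq_emod_four Z, sq_emod_four T]
  rcases hodd with hY | hZ
  · obtain ⟨Y', X, hYT⟩ := exists_sq_add_three_mul_sq_eq_sq_add_twelve_mul_sq hY hT
    exact ⟨Y', Z, X, by linarith⟩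
  · obtain ⟨Z', X, hZT⟩ := exists_sq_add_three_mul_sq_eq_sq_add_twelve_mul_sq hZ hT
    exact ⟨Y, Z', X, by linarith⟩

theorem exists_five_mul_sq_add_sq_eq_not_dvd (T : ℤ) :
    ∃ x T' : ℤ, 5 * 3 ^ 2 + T ^ 2 = 5 * x ^ 2 + T' ^ 2 ∧ ¬3 ∣ T' := by
  by_cases hT : 3 ∣ T
  · obtain ⟨S, rfl⟩ := hT
    by_cases hS : 3 ∣ 2 * S - 5
    · exact ⟨S - 2, 2 * S + 5, by ring, by lia⟩
    · exact ⟨S + 2, 2 * S - 5, by ring, hS⟩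
  · exact ⟨3, T, rfl, hT⟩

/-- `N` is a value of the mixed sum `αx² + P₈(y) + P₈(z) + 3P₈(t)`. -/
def IsMixedOctagonalSum (α N : ℤ) : Prop :=
  ∃ x y z t : ℤ,
    α * x ^ 2 + (3 * y ^ 2 - 2 * y) + (3 * z ^ 2 - 2 * z) + 3 * (3 * t ^ 2 - 2 * t) = N

theorem exists_three_mul_sub_one_sq_eq {X : ℤ} (hX : ¬3 ∣ X) :
    ∃ x : ℤ, (3 * x - 1) ^ 2 = X ^ 2 := by
  by_cases h : 3 ∣ X + 1
  · exact ⟨(X + 1) / 3, by rw [Int.mul_ediv_cancel' h, add_sub_cancel_right]⟩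
  · exact ⟨(1 - X) / 3, by rw [Int.mul_ediv_cancel' (by lia), sub_sub_cancel_left, neg_sq]⟩

theorem isMixedOctagonalSum_of_eq {α N x Y Z T : ℤ}
    (h : 3 * N + 5 = 3 * (α * x ^ 2) + Y ^ 2 + Z ^ 2 + 3 * T ^ 2) (hT : ¬3 ∣ T) :
    IsMixedOctagonalSum α N := by
  have hYZ : ¬3 ∣ Y ∧ ¬3 ∣ Z := by grind [sq_emod_three Y, sq_emod_three Z]
  obtain ⟨y, hy⟩ := exists_three_mul_sub_one_sq_eq hYZ.1
  obtain ⟨z, hz⟩ := exists_three_mul_sub_one_sq_eq hYZ.2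
  obtain ⟨t, ht⟩ := exists_three_mul_sub_one_sq_eq hT
  exact ⟨x, y, z, t, by linarith⟩

theorem isMixedOctagonalSum_of_lt {α N : ℤ} (hα : α ∈ Finset.Icc 4 6)
    (hN : N ∈ Finset.Ico 0 44) : IsMixedOctagonalSum α N := by
  have hsearch : ∀ α ∈ Finset.Icc (4 : ℤ) 6, ∀ N ∈ Finset.Ico (0 : ℤ) 44,
      ∃ t ∈ Finset.Icc (0 : ℤ) 1, ∃ x ∈ Finset.Icc (0 : ℤ) 2, ∃ z ∈ Finset.Icc (-2 : ℤ) 1,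
        ∃ y ∈ Finset.Icc (-3 : ℤ) 3,
          α * x ^ 2 + (3 * y ^ 2 - 2 * y) + (3 * z ^ 2 - 2 * z) + 3 * (3 * t ^ 2 - 2 * t) = N := by
    decide +kernel
  obtain ⟨t, -, x, -, z, -, y, -, h⟩ := hsearch α hα N hN
  exact ⟨x, y, z, t, h⟩

theorem isMixedOctagonalSum_four {N : ℤ} (hN : 3 ≤ N) : IsMixedOctagonalSum 4 N := by
  rcases Int.emod_two_eq_zero_or_one N with hpar | hpar
  · obtain ⟨Y, Z, X, h⟩ := exists_eq_sq_add_sq_add_twelve_mul_sq (n := 3 * N + 5 - 3 * 1 ^ 2)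
      (by lia) (by lia) (by lia)
    exact isMixedOctagonalSum_of_eq (x := X) (Y := Y) (Z := Z) (T := 1) (by linarith)
      (by norm_num)
  · obtain ⟨Y, Z, X, h⟩ := exists_eq_sq_add_sq_add_twelve_mul_sq (n := 3 * N + 5 - 3 * 2 ^ 2)
      (by lia) (by lia) (by lia)
    exact isMixedOctagonalSum_of_eq (x := X) (Y := Y) (Z := Z) (T := 2) (by linarith)
      (by norm_num)

theorem isMixedOctagonalSum_five {N : ℤ} (hN : 44 ≤ N) : IsMixedOctagonalSum 5 N := by
  obtain ⟨Y, Z, T, hYZT⟩ :=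
    exists_eq_sq_add_sq_add_three_mul_sq (n := 3 * N + 5 - 3 * (5 * 3 ^ 2)) (by lia) (by lia)
  obtain ⟨x, T', hxT, hT'⟩ := exists_five_mul_sq_add_sq_eq_not_dvd T
  exact isMixedOctagonalSum_of_eq (x := x) (Y := Y) (Z := Z) (by linarith) hT'

theorem isMixedOctagonalSum_six {N : ℤ} (hN : 5 ≤ N) : IsMixedOctagonalSum 6 N := by
  obtain ⟨x, hx, hmod⟩ : ∃ x : ℤ, 0 ≤ 3 * N + 5 - 18 * x ^ 2 ∧
      ((3 * N + 5 - 18 * x ^ 2) % 4 = 0 ∨ (3 * N + 5 - 18 * x ^ 2) % 4 = 1) := by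
    by_cases h : (3 * N + 5) % 4 < 2
    · exact ⟨0, by lia, by lia⟩
    · exact ⟨1, by lia, by lia⟩
  obtain ⟨Y, Z, T, hYZT, hT⟩ := exists_eq_sq_add_sq_add_three_mul_sq_not_dvd hx (by lia) hmod
  exact isMixedOctagonalSum_of_eq (x := x) (Y := Y) (Z := Z) (by linarith) hT

end OctagonalSums

theorem universal_case_4_31 :
    ∀ α : ℤ, 4 ≤ α → α ≤ 6 → ∀ N : ℤ, 0 ≤ N →
      ∃ x y z t : ℤ,
        α * x ^ 2 + (3 * y ^ 2 - 2 * y) + (3 * z ^ 2 - 2 * z) +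
          3 * (3 * t ^ 2 - 2 * t) = N := by
  intro α hα₄ hα₆ N hN
  change IsMixedOctagonalSum α N
  rcases lt_or_ge N 44 with hsmall | hlarge
  · exact isMixedOctagonalSum_of_lt (Finset.mem_Icc.mpr ⟨hα₄, hα₆⟩)
      (Finset.mem_Ico.mpr ⟨hN, hsmall⟩)
  interval_cases α
  · exact isMixedOctagonalSum_four (by lia)
  · exact isMixedOctagonalSum_five hlarge
  · exact isMixedOctagonalSum_six (by lia)
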